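/- arXiv:1507.06167 — 2 statements merged into one kernel-verified Lean document; each statement's English description precedes it below -/
import Mathlib

section
/- For every n ≥ 1, every set X, every n-ary partial function a on X that is injective (i.e., whenever a is defined at x and at y with a(x) = a(y), then x = y), every i ∈ {1,…,n}, and all n-ary partial functions b₁,…,bₙ, c₁,…,cₙ on X: if ⟨b₁,…,bₙ⟩∘a = ⟨c₁,…,cₙ⟩∘a then ⟨b₁,…,bₙ⟩∘Dᵢa = ⟨c₁,…,cₙ⟩∘Dᵢa. -/
/-!
The value of `⟨b⟩∘a` at `x` is `a` evaluated at the tuple `(b₁(x),…,bₙ(x))`. If it equals the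
value of `⟨c⟩∘a` at `x`, injectivity of `a` makes the tuples `(bⱼ(x))ⱼ` and `(cⱼ(x))ⱼ` equal, so
their `i`-th entries, the values of `⟨b⟩∘Dᵢa` and `⟨c⟩∘Dᵢa` at `x`, agree. Working with graphs
(`mem_nComp`, `mem_nDom`), one inclusion suffices because the hypothesis is symmetric in `b`, `c`.
-/

/-- Composition of `n`-ary partial functions: `⟨f₁,…,fₙ⟩∘g` is defined at `x`
iff each `fᵢ(x)` is defined and `g` is defined at `(f₁(x),…,fₙ(x))`,
in which case its value is `g(f₁(x),…,fₙ(x))`. -/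
def nComp {n : ℕ} {X : Type*} (f : Fin n → ((Fin n → X) →. X))
    (g : (Fin n → X) →. X) : (Fin n → X) →. X := fun x =>
  Part.mk (∃ h : ∀ i, (f i x).Dom, (g fun i => (f i x).get (h i)).Dom)
    (fun h => (g fun i => (f i x).get (h.choose i)).get h.choose_spec)

/-- The `i`-th domain operation: `Dᵢf` is defined at `x` with value `xᵢ` iff `f(x)` is defined. -/
def nDom {n : ℕ} {X : Type*} (i : Fin n) (f : (Fin n → X) →. X) :
    (Fin n → X) →. X := fun x => Part.mk (f x).Dom (fun _ => x i)

/-- The `i`-th antidomain operation: `Aᵢf` is defined at `x` with value `xᵢ` iff `f(x)` is undefined. -/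
def nAnti {n : ℕ} {X : Type*} (i : Fin n) (f : (Fin n → X) →. X) :
    (Fin n → X) →. X := fun x => Part.mk (¬ (f x).Dom) (fun _ => x i)

theorem mem_nComp {n : ℕ} {X : Type*} (f : Fin n → ((Fin n → X) →. X))
    (g : (Fin n → X) →. X) (x : Fin n → X) (z : X) :
    z ∈ nComp f g x ↔ ∃ y : Fin n → X, (∀ j, y j ∈ f j x) ∧ z ∈ g y := by
  constructor
  · rintro ⟨hd, rfl⟩
    exact ⟨_, fun j => Part.get_mem (hd.choose j), Part.get_mem hd.choose_spec⟩
  · rintro ⟨y, hy, hz⟩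
    choose hd hyd using hy
    obtain rfl : (fun j => (f j x).get (hd j)) = y := funext hyd
    obtain ⟨hg, rfl⟩ := hz
    exact ⟨⟨hd, hg⟩, rfl⟩

theorem mem_nDom {n : ℕ} {X : Type*} (i : Fin n) (f : (Fin n → X) →. X)
    (x : Fin n → X) (z : X) : z ∈ nDom i f x ↔ (∃ w, w ∈ f x) ∧ x i = z := by
  constructor
  · rintro ⟨hd, rfl⟩
    exact ⟨Part.dom_iff_mem.1 hd, rfl⟩
  · rintro ⟨⟨w, hd, -⟩, rfl⟩
    exact ⟨hd, rfl⟩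

/-- One inclusion of graphs in the conclusion; the other follows by exchanging `b` and `c`. -/
theorem mem_nComp_nDom_of_eq {n : ℕ} {X : Type*} {a : (Fin n → X) →. X}
    (ha : ∀ (x y : Fin n → X) (z : X), z ∈ a x → z ∈ a y → x = y)
    (i : Fin n) {b c : Fin n → ((Fin n → X) →. X)} (h : nComp b a = nComp c a)
    {x : Fin n → X} {z : X} (hz : z ∈ nComp b (nDom i a) x) : z ∈ nComp c (nDom i a) x := by
  obtain ⟨y, hy, hyz⟩ := (mem_nComp _ _ _ _).1 hz
  obtain ⟨⟨w, hw⟩, -⟩ := (mem_nDom _ _ _ _).1 hyz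
  have hwc : w ∈ nComp c a x := h ▸ (mem_nComp _ _ _ _).2 ⟨y, hy, hw⟩
  obtain ⟨yc, hyc, hwa⟩ := (mem_nComp _ _ _ _).1 hwc
  obtain rfl := ha y yc w hw hwa
  exact (mem_nComp _ _ _ _).2 ⟨y, hyc, hyz⟩

/-- An injective `n`-ary partial function is an injective element: if `⟨b⟩∘a = ⟨c⟩∘a`
then `⟨b⟩∘Dᵢa = ⟨c⟩∘Dᵢa`. -/
theorem injective_function_is_injective_element {n : ℕ} (hn : 1 ≤ n) (X : Type*)
    (a : (Fin n → X) →. X)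
    (ha : ∀ (x y : Fin n → X) (z : X), z ∈ a x → z ∈ a y → x = y)
    (i : Fin n) (b c : Fin n → ((Fin n → X) →. X))
    (h : nComp b a = nComp c a) :
    nComp b (nDom i a) = nComp c (nDom i a) := by
  funext x
  exact Part.ext fun z => ⟨mem_nComp_nDom_of_eq ha i h, mem_nComp_nDom_of_eq ha i h.symm⟩
end

section
/- Under the axioms (1)–(9), for each i ∈ {1,…,n} the set of Aᵢ-elements {Aᵢa : a ∈ A} forms a semilattice under the product Aᵢa •ᵢ Aᵢb := ⟨Aa⟩∘Aᵢb: this product is well defined (if Aᵢa = Aᵢb then Aⱼa = Aⱼb for every j), the set of Aᵢ-elements is closed under it, and it is idempotent, commutative and associative. -/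
/-!
Write `[v]` for the map `x ↦ ⟨v⟩∘x`; superassociativity says that `[[v]w₁,…,[v]wₙ] = [v][w]`.

By (9) the entries of `⟨Aa⟩` all have the same domain vector, so by (8) the chain in the twisted law
(6) acts trivially and (6) becomes `[Aa]Aᵢb = [A([Aa]b)]Aᵢa` (`comp_avec_anti`). Taking `b = a`
gives idempotence, since `[A0] = id` by (2), and replacing `a` by some `Aⱼa` gives the same law
for `⟨Da⟩`. Together with (3) these show that `[Aa]` and `[Da]` annihilate each other.

The remaining identities come from the cancellation law (7), tested on `[Da]` and `[Aa]`:
`AᵢDⱼa = Aᵢa` (`anti_dom`), which gives well-definedness because `Aᵢa` determines every `Dⱼa`;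
and commutativity (`comp_comm`). For closure, `p = [Aa]Aᵢb` satisfies `p = Dᵢp`: `Dᵢp` is fixed by
`[Aa]` and `[Ab]`, hence `p = [Dp]p = [Aa][Dp]Aᵢb = [Aa][Ab]Dᵢp = Dᵢp`. Associativity follows from
commutativity and from the fact that the maps `[Aa]` and `[Ab]` commute.
-/

/-- An algebra with an `(n+1)`-ary composition `⟨a₁,…,aₙ⟩∘b` and
`n` antidomain operations `A₁,…,Aₙ`. -/
structure MAlg (n : ℕ) (A : Type*) where
  comp : (Fin n → A) → A → A
  anti : Fin n → A → A

namespace MAlg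

variable {n : ℕ} {A : Type*} [Inhabited A]

/-- `⟨Aa⟩ = (A₁a,…,Aₙa)`. -/
def avec (M : MAlg n A) (a : A) : Fin n → A := fun i => M.anti i a

/-- `0 := ⟨Ab⟩∘b` (independent of `b` by axiom (3)). -/
def zero (M : MAlg n A) : A := M.comp (M.avec default) default

/-- `πᵢ := Aᵢ0`. -/
def pi (M : MAlg n A) (i : Fin n) : A := M.anti i M.zero

/-- `Dᵢa := Aᵢ(Aᵢa)`. -/
def dom (M : MAlg n A) (i : Fin n) (a : A) : A := M.anti i (M.anti i a)

/-- `⟨Da⟩ = (D₁a,…,Dₙa)`. -/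
def dvec (M : MAlg n A) (a : A) : Fin n → A := fun i => M.dom i a

/-- The chain `⟨Da₁⟩∘(⟨Da₂⟩∘(⋯∘(⟨Daₙ⟩∘t)))`. -/
def dchain (M : MAlg n A) (a : Fin n → A) (t : A) : A :=
  (List.ofFn a).foldr (fun u acc => M.comp (M.dvec u) acc) t

/-- Axioms (1)–(9). -/
structure Ax (M : MAlg n A) : Prop where
  /-- (1) superassociativity -/
  ax1 : ∀ (a b : Fin n → A) (c : A),
    M.comp (fun i => M.comp a (b i)) c = M.comp a (M.comp b c)
  /-- (2) `⟨π₁,…,πₙ⟩∘a = a` -/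
  ax2 : ∀ a : A, M.comp M.pi a = a
  /-- (3) `⟨Aa⟩∘a = ⟨Ab⟩∘b` -/
  ax3 : ∀ a b : A, M.comp (M.avec a) a = M.comp (M.avec b) b
  /-- (4) `⟨a₁,…,0,…,aₙ⟩∘b = 0` with `0` in any position -/
  ax4 : ∀ (a : Fin n → A) (i : Fin n) (b : A),
    M.comp (Function.update a i M.zero) b = M.zero
  /-- (5) `⟨a⟩∘0 = 0` -/
  ax5 : ∀ a : Fin n → A, M.comp a M.zero = M.zero
  /-- (6) the twisted laws for antidomain -/
  ax6 : ∀ (a : Fin n → A) (i : Fin n) (b : A),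
    M.comp a (M.anti i b) = M.comp (M.avec (M.comp a b)) (M.dchain a (a i))
  /-- (7) the quasiequation -/
  ax7 : ∀ a b c : A,
    M.comp (M.dvec a) b = M.comp (M.dvec a) c →
    M.comp (M.avec a) b = M.comp (M.avec a) c → b = c
  /-- (8) `⟨Da⟩∘a = a` -/
  ax8 : ∀ a : A, M.comp (M.dvec a) a = a
  /-- (9) `Aᵢ(Aⱼa) = Aᵢ(Aₖa)` -/
  ax9 : ∀ (i j k : Fin n) (a : A), M.anti i (M.anti j a) = M.anti i (M.anti k a)

end MAlg

namespace MAlg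

variable {n : ℕ} {A : Type*} [Inhabited A] {M : MAlg n A}

namespace Ax

theorem avec_self (hM : M.Ax) (a : A) : M.comp (M.avec a) a = M.zero := hM.ax3 a default

theorem comp_avec_zero (hM : M.Ax) (x : A) : M.comp (M.avec M.zero) x = x := hM.ax2 x

/-- By (9), the vector `(A₁(Aⱼa),…,Aₙ(Aⱼa))` does not depend on `j`. -/
theorem avec_anti (hM : M.Ax) (j : Fin n) (a : A) : M.avec (M.anti j a) = M.dvec a :=
  funext fun k => hM.ax9 k j k a

theorem dvec_anti (hM : M.Ax) (j k : Fin n) (a : A) :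
    M.dvec (M.anti j a) = M.dvec (M.anti k a) := by
  funext l
  simp only [dvec, dom]
  rw [hM.ax9 l j k a]

theorem dchain_avec (hM : M.Ax) (a : A) (i : Fin n) :
    M.dchain (M.avec a) (M.avec a i) = M.anti i a := by
  have key : ∀ l : List A, (∀ u ∈ l, ∃ j, M.anti j a = u) →
      l.foldr (fun u acc => M.comp (M.dvec u) acc) (M.anti i a) = M.anti i a := by
    intro l
    induction l with
    | nil => intro _; rfl
    | cons u l ih =>
      intro h
      obtain ⟨j, rfl⟩ := h u (by simp)
      rw [List.foldr_cons, ih fun v hv => h v (by simp [hv]), hM.dvec_anti j i, hM.ax8]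
  refine key _ fun u hu => ?_
  obtain ⟨j, rfl⟩ := List.mem_ofFn.1 hu
  exact ⟨j, rfl⟩

/-- The twisted law for an antidomain vector, where the chain of domains disappears. -/
theorem comp_avec_anti (hM : M.Ax) (a b : A) (i : Fin n) :
    M.comp (M.avec a) (M.anti i b) = M.comp (M.avec (M.comp (M.avec a) b)) (M.anti i a) := by
  rw [hM.ax6, hM.dchain_avec]

theorem comp_dvec_anti (hM : M.Ax) (a b : A) (i : Fin n) :
    M.comp (M.dvec a) (M.anti i b) = M.comp (M.avec (M.comp (M.dvec a) b)) (M.dom i a) := by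
  have h := hM.comp_avec_anti (M.anti i a) b i
  rwa [hM.avec_anti] at h

theorem idem (hM : M.Ax) (a : A) (i : Fin n) :
    M.comp (M.avec a) (M.anti i a) = M.anti i a := by
  rw [hM.comp_avec_anti, hM.avec_self, hM.comp_avec_zero]

theorem dvec_dom (hM : M.Ax) (a : A) (i : Fin n) :
    M.comp (M.dvec a) (M.dom i a) = M.dom i a := by
  have h := hM.idem (M.anti i a) i
  rwa [hM.avec_anti] at h

theorem dvec_anti_self (hM : M.Ax) (a : A) (i : Fin n) :
    M.comp (M.dvec a) (M.anti i a) = M.zero := by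
  rw [← hM.avec_anti i a, hM.avec_self]

theorem avec_dom_self (hM : M.Ax) (a : A) (i : Fin n) :
    M.comp (M.avec a) (M.dom i a) = M.zero := by
  rw [dom, hM.comp_avec_anti, hM.idem, hM.avec_self]

/-- Superassociativity and the twisted law let `[Aa]` move past `[Ab]`. -/
theorem avec_avec (hM : M.Ax) (a b x : A) :
    M.comp (M.avec a) (M.comp (M.avec b) x) =
      M.comp (M.avec (M.comp (M.avec a) b)) (M.comp (M.avec a) x) := by
  rw [← hM.ax1, ← hM.ax1]
  congr 1
  funext k
  exact hM.comp_avec_anti a b k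

theorem dvec_avec (hM : M.Ax) (a b x : A) :
    M.comp (M.dvec a) (M.comp (M.avec b) x) =
      M.comp (M.avec (M.comp (M.dvec a) b)) (M.comp (M.dvec a) x) := by
  rw [← hM.ax1, ← hM.ax1]
  congr 1
  funext k
  exact hM.comp_dvec_anti a b k

theorem comp_const_zero (hM : M.Ax) (i : Fin n) (x : A) :
    M.comp (fun _ => M.zero) x = M.zero := by
  have h := hM.ax4 (fun _ => M.zero) i x
  rwa [Function.update_eq_self_iff.2 rfl] at h

/-- The index `i` only witnesses `n ≠ 0`. -/
theorem dvec_avec_self (hM : M.Ax) (i : Fin n) (a x : A) :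
    M.comp (M.dvec a) (M.comp (M.avec a) x) = M.zero := by
  rw [← hM.ax1, ← hM.comp_const_zero i x]
  congr 1
  funext k
  exact hM.dvec_anti_self a k

theorem avec_avec_self (hM : M.Ax) (a x : A) :
    M.comp (M.avec a) (M.comp (M.avec a) x) = M.comp (M.avec a) x := by
  rw [hM.avec_avec, hM.avec_self, hM.comp_avec_zero]

/-- The antidomain of `Dⱼa` is that of `a`. -/
theorem anti_dom (hM : M.Ax) (a : A) (i j : Fin n) : M.anti i (M.dom j a) = M.anti i a := by
  apply hM.ax7 a
  · rw [hM.comp_dvec_anti, hM.dvec_dom, hM.dvec_anti_self]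
    have h : M.avec (M.dom j a) = M.avec (M.dom i a) := by
      funext k
      simp only [avec, dom]
      rw [hM.ax9 j j i a, hM.ax9 k j i]
    rw [h, hM.avec_self]
  · rw [hM.comp_avec_anti, hM.avec_dom_self, hM.comp_avec_zero, hM.idem]

theorem comp_comm (hM : M.Ax) (a b : A) (i : Fin n) :
    M.comp (M.avec a) (M.anti i b) = M.comp (M.avec b) (M.anti i a) := by
  apply hM.ax7 a
  · rw [hM.dvec_avec_self i, hM.dvec_avec, hM.dvec_anti_self, hM.ax5]
  · rw [hM.avec_avec_self, hM.avec_avec a b, hM.idem, ← hM.comp_avec_anti]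

theorem avec_comm (hM : M.Ax) (a b x : A) :
    M.comp (M.avec a) (M.comp (M.avec b) x) = M.comp (M.avec b) (M.comp (M.avec a) x) := by
  rw [← hM.ax1, ← hM.ax1]
  congr 1
  funext k
  exact hM.comp_comm a b k

/-- An element fixed by `[Aa]` has its domain inside the antidomain of `a`. -/
theorem avec_dom (hM : M.Ax) (a p : A) (i : Fin n) (hp : M.comp (M.avec a) p = p) :
    M.comp (M.avec a) (M.dom i p) = M.dom i p := by
  have hp0 : M.comp (M.dvec a) p = M.zero := by rw [← hp, hM.dvec_avec_self i]
  apply hM.ax7 a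
  · have h1 : M.comp (M.dvec a) (M.anti i p) = M.dom i a := by
      rw [hM.comp_dvec_anti, hp0, hM.comp_avec_zero]
    rw [hM.dvec_avec_self i, dom, hM.comp_dvec_anti, h1, hM.avec_self]
  · rw [hM.avec_avec_self]

/-- The product of two `Aᵢ`-elements equals its own domain. -/
theorem closure (hM : M.Ax) (a b : A) (i : Fin n) :
    M.comp (M.avec a) (M.anti i b) = M.dom i (M.comp (M.avec a) (M.anti i b)) := by
  set p := M.comp (M.avec a) (M.anti i b) with hp
  have ha : M.comp (M.avec a) (M.dom i p) = M.dom i p :=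
    hM.avec_dom a p i (by rw [hp, hM.avec_avec_self])
  have hb : M.comp (M.avec b) (M.dom i p) = M.dom i p :=
    hM.avec_dom b p i (by rw [hp, hM.comp_comm, hM.avec_avec_self])
  calc p = M.comp (M.dvec p) p := (hM.ax8 p).symm
    _ = M.comp (M.avec (M.anti i p)) (M.comp (M.avec a) (M.anti i b)) := by
        rw [hM.avec_anti, ← hp]
    _ = M.comp (M.avec a) (M.comp (M.avec b) (M.dom i p)) := by
        rw [hM.avec_comm, hM.comp_comm (M.anti i p) b]; rfl
    _ = M.dom i p := by rw [hb, ha]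

end Ax

end MAlg

/-- The `Aᵢ`-elements form a semilattice under `Aᵢa •ᵢ Aᵢb := ⟨Aa⟩∘Aᵢb`:
the product is well defined, the `Aᵢ`-elements are closed under it, and it is
idempotent, commutative and associative. -/
theorem antidomain_semilattice {n : ℕ} (hn : 1 ≤ n) {A : Type*} [Inhabited A]
    (M : MAlg n A) (hM : M.Ax) (i : Fin n) :
    -- well defined
    (∀ a b : A, M.anti i a = M.anti i b → ∀ j : Fin n, M.anti j a = M.anti j b) ∧
    -- closure: the product of two `Aᵢ`-elements is an `Aᵢ`-element
    (∀ a b : A, ∃ c : A, M.comp (M.avec a) (M.anti i b) = M.anti i c) ∧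
    -- idempotent
    (∀ a : A, M.comp (M.avec a) (M.anti i a) = M.anti i a) ∧
    -- commutative
    (∀ a b : A, M.comp (M.avec a) (M.anti i b) = M.comp (M.avec b) (M.anti i a)) ∧
    -- associative (stated via representatives of the two products)
    (∀ a b c d e : A,
      M.anti i d = M.comp (M.avec a) (M.anti i b) →
      M.anti i e = M.comp (M.avec b) (M.anti i c) →
      M.comp (M.avec d) (M.anti i c) = M.comp (M.avec a) (M.anti i e)) := by
  refine ⟨fun a b h j => ?_, fun a b => ⟨_, hM.closure a b i⟩, fun a => hM.idem a i,
    fun a b => hM.comp_comm a b i, fun a b c d e hd he => ?_⟩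
  · rw [← hM.anti_dom a j i, ← hM.anti_dom b j i, MAlg.dom, MAlg.dom, h]
  · rw [hM.comp_comm d c, hd, he, hM.avec_comm c a, hM.comp_comm c b]
end
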